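/- arXiv:1202.2279 — 2 statements merged into one kernel-verified Lean document; each statement's English description precedes it below -/
import Mathlib

section
/- Assume hypotheses (H). Then every subspace F of ℝ^p that is defined over ℚ and contains e_1, …, e_k satisfies dim_ℝ F ≥ k + τ_1 + … + τ_k. -/
/-!
The indices `n` for which all the cosines stay away from `0` are return times of a rotation of a
torus, so their gaps are bounded. As `log Q (n + 1) ~ log Q n`, the numbers `x = log Q n` attached
to these indices come relatively close to every large number.

Suppose that `dim F = d < k + ∑ τ j`. In integer coordinates of `F` we are given points
`e j ∈ ℝ ^ d` and integer linear forms `L` of height `exp x` with `|L (e j)| ≈ exp (-τ j x)`. As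
`d < ∑ (τ j - ε + 1)` for some `ε > 0`, the pigeonhole principle provides, for every large `U`, real
coefficients `lam j` with `|lam j| ≤ exp ((τ j - ε) U)`, not all zero, the nonzero ones not too
small, such that `∑ lam j • e j` is within `exp (-U)` of an integer point `P`.

Let `X` be the first scale at which `|lam j| ≤ exp ((τ j - 2 δ) X)` for all `j`, so that there is
equality for one `j`. As the `τ j` are distinct, some form of height `exp x` with `x` slightly
larger than `X` makes the terms `|lam j L (e j)|` of pairwise different orders of magnitude, so that
one of them dominates; it is also smaller than `1 / 2`. The integer `L P` is the sum of these terms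
up to `exp (x - U)`. If the dominant term exceeded this error, then `L P` would be a nonzero integer
of absolute value less than `1`. Hence all terms are at most about `exp (x - U)`. But the equality
defining `X` makes one term about `exp (-2 δ X)`, which is larger because it also forces
`U ≥ (1 + η) X` with `η > 0` independent of `δ`.
-/

open Filter Topology Real

variable {ι κ α : Type*}

/-! ### Scales reached by a sequence -/

/-- A set of natural numbers is syndetic if the gaps between its consecutive elements are
bounded. -/
def IsSyndetic (G : Set ℕ) : Prop :=
  ∃ B, ∀ N, ∃ n ∈ G, N ≤ n ∧ n ≤ N + B

theorem isSyndetic_setOf_pow_mem {G : Type*} [Group G] [TopologicalSpace G]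
    [IsTopologicalGroup G] [CompactSpace G] (g : G) {U : Set G} (hU : U ∈ 𝓝 1) :
    IsSyndetic {n : ℕ | g ^ n ∈ U} := by
  -- By compactness the translates `g ^ m * U` with `m` at most some `b` cover the orbit closure.
  -- So `g ^ (N + b)` lies in one of them, which puts `g ^ (N + b - m)` in `U`.
  let V (m : ℕ) : Set G := {y | (g ^ m)⁻¹ * y ∈ interior U}
  have hVopen (m : ℕ) : IsOpen (V m) := isOpen_interior.preimage (continuous_const_mul _)
  have hVcover : closure (Set.range (g ^ · : ℕ → G)) ⊆ ⋃ m, V m := by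
    intro x hx
    have hopen : IsOpen {y : G | y⁻¹ * x ∈ interior U} :=
      isOpen_interior.preimage (by fun_prop)
    obtain ⟨_, hy, m, rfl⟩ := mem_closure_iff.1 hx {y | y⁻¹ * x ∈ interior U} hopen <| by
      rwa [Set.mem_ofPred_eq, inv_mul_cancel, mem_interior_iff_mem_nhds]
    exact Set.mem_iUnion.2 ⟨m, hy⟩
  obtain ⟨t, ht⟩ := isClosed_closure.isCompact.elim_finite_subcover V hVopen hVcover
  set b := t.sup id
  refine ⟨b, fun N ↦ ?_⟩
  obtain ⟨m, hmt, hm⟩ := Set.mem_iUnion₂.1 (ht (subset_closure ⟨N + b, rfl⟩))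
  have hle : m ≤ b := Finset.le_sup (f := id) hmt
  refine ⟨N + b - m, ?_, by omega, by omega⟩
  have hpow : g ^ (N + b) = g ^ m * g ^ (N + b - m) := by
    rw [← pow_add, Nat.add_sub_cancel' (by omega)]
  have hm' : (g ^ m)⁻¹ * g ^ (N + b) ∈ interior U := hm
  rw [hpow, inv_mul_cancel_left] at hm'
  exact (interior_subset hm' : g ^ (N + b - m) ∈ U)

theorem exists_isSyndetic_setOf_le_abs_cos [Finite ι] (ω φ : ι → ℝ) {n₀ : ℕ}
    (h : ∀ j, cos (n₀ * ω j + φ j) ≠ 0) :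
    ∃ c > 0, IsSyndetic {n : ℕ | ∀ j, c ≤ |cos (n * ω j + φ j)|} := by
  obtain ⟨c, hc, hlt⟩ := Pi.exists_forall_pos_add_lt fun j ↦ abs_pos.2 (h j)
  let U : Set (ι → Circle) :=
    {z | ∀ j, c < |((z j * Circle.exp (n₀ * ω j + φ j) : Circle) : ℂ).re|}
  have hre (x : ℝ) : ((Circle.exp x : Circle) : ℂ).re = cos x := by
    rw [Circle.coe_exp, Complex.exp_ofReal_mul_I_re]
  have hUopen : IsOpen U := by
    simp only [U, Set.ofPred_forall]
    exact isOpen_iInter_of_finite fun j ↦ isOpen_lt continuous_const (by fun_prop)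
  have hU : U ∈ 𝓝 1 := hUopen.mem_nhds fun j ↦ by
    rw [Pi.one_apply, one_mul, hre, ← zero_add c]
    exact hlt j
  obtain ⟨B, hB⟩ := isSyndetic_setOf_pow_mem (fun j ↦ Circle.exp (ω j)) hU
  refine ⟨c, hc, B + n₀, fun N ↦ ?_⟩
  obtain ⟨q, hq, hNq, hqN⟩ := hB N
  refine ⟨q + n₀, fun j ↦ ?_, by omega, by omega⟩
  have hcos := hq j
  rw [Pi.pow_apply, ← Circle.exp_natCast_mul, ← Circle.exp_add, hre] at hcos
  refine hcos.le.trans_eq ?_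
  push_cast
  ring_nf

/-- The values `x n` along the filter `F` meet every large interval `[(1 - ρ) X, (1 + ρ) X]`. For
`x n = log (Q n)` this says that `Q n` hits every large scale, up to a factor `1 + o(1)` in the
exponent. -/
def HasDenseScales (x : α → ℝ) (F : Filter α) : Prop :=
  ∀ ρ > 0, ∀ s ∈ F, ∀ᶠ X in atTop, ∃ n ∈ s, |x n - X| ≤ ρ * X

section Sequence

variable {x : ℕ → ℝ}

theorem tendsto_add_div_self (hx : Tendsto x atTop atTop)
    (hr : Tendsto (fun n ↦ x (n + 1) / x n) atTop (𝓝 1)) (i : ℕ) :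
    Tendsto (fun n ↦ x (n + i) / x n) atTop (𝓝 1) := by
  induction i with
  | zero =>
    refine tendsto_const_nhds.congr' ?_
    filter_upwards [hx.eventually_gt_atTop 0] with n hn
    rw [add_zero, div_self hn.ne']
  | succ i ih =>
    have hmul := (hr.comp (tendsto_add_atTop_nat i)).mul ih
    rw [mul_one] at hmul
    refine hmul.congr' ?_
    filter_upwards [(tendsto_add_atTop_nat i).eventually (hx.eventually_gt_atTop 0)] with n hn
    exact div_mul_div_cancel₀ hn.ne'

theorem exists_le_lt_succ_of_tendsto_atTop (hx : Tendsto x atTop atTop) {N : ℕ} {X : ℝ}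
    (hX : x N ≤ X) : ∃ m ≥ N, x m ≤ X ∧ X < x (m + 1) := by
  by_contra! hcon
  have hle : ∀ m ≥ N, x m ≤ X := fun m hm ↦ Nat.le_induction hX hcon m hm
  obtain ⟨m, hNm, hXm⟩ := ((eventually_ge_atTop N).and (hx.eventually_gt_atTop X)).exists
  exact (hle m hNm).not_gt hXm

theorem hasDenseScales_of_tendsto_div (hx : Tendsto x atTop atTop)
    (hr : Tendsto (fun n ↦ x (n + 1) / x n) atTop (𝓝 1)) {G : Set ℕ} (hG : IsSyndetic G) :
    HasDenseScales x (atTop ⊓ 𝓟 G) := by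
  intro ρ hρ s hs
  obtain ⟨B, hB⟩ := hG
  have hnear : ∀ᶠ m in atTop, ∀ i ∈ Finset.range (B + 2), |x (m + i) - x m| ≤ ρ / 2 * x m := by
    rw [Filter.eventually_all_finset]
    intro i _
    filter_upwards [(tendsto_add_div_self hx hr i).eventually
      (Metric.closedBall_mem_nhds 1 (half_pos hρ)), hx.eventually_gt_atTop 0] with m hm hpos
    rwa [Real.dist_eq, div_sub_one hpos.ne', abs_div, abs_of_pos hpos,
      div_le_iff₀ hpos] at hm
  obtain ⟨N, hN⟩ := eventually_atTop.1 (hnear.and (eventually_inf_principal.1 hs))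
  filter_upwards [eventually_ge_atTop (x N)] with X hX
  obtain ⟨m, hNm, hmX, hXm⟩ := exists_le_lt_succ_of_tendsto_atTop hx hX
  obtain ⟨n, hnG, hmn, hnm⟩ := hB m
  obtain ⟨i, rfl⟩ := Nat.exists_eq_add_of_le hmn
  refine ⟨m + i, (hN (m + i) (by omega)).2 hnG, ?_⟩
  have hi := (hN m hNm).1 i (Finset.mem_range.2 (by omega))
  have h1 := (hN m hNm).1 1 (Finset.mem_range.2 (by omega))
  have hρX : ρ / 2 * x m ≤ ρ / 2 * X := by gcongr
  rw [abs_le] at hi h1 ⊢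
  constructor <;> linarith

theorem tendsto_div_of_le_one_add_div (hmono : Monotone x) (hpos : ∀ n, 1 ≤ n → 0 < x n) {M : ℝ}
    (h : ∀ n : ℕ, 1 ≤ n → x (n + 1) ≤ (1 + M / n) * x n) :
    Tendsto (fun n ↦ x (n + 1) / x n) atTop (𝓝 1) := by
  have hlim : Tendsto (fun n : ℕ ↦ 1 + M / (n : ℝ)) atTop (𝓝 1) := by
    simpa using (tendsto_const_div_atTop_nhds_zero_nat M).const_add 1
  refine tendsto_of_tendsto_of_tendsto_of_le_of_le' tendsto_const_nhds hlim ?_ ?_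
  · filter_upwards [eventually_ge_atTop 1] with n hn
    exact (one_le_div (hpos n hn)).2 (hmono n.le_succ)
  · filter_upwards [eventually_ge_atTop 1] with n hn
    exact (div_le_iff₀ (hpos n hn)).2 (h n hn)

end Sequence

/-! ### Integer points near a linear combination -/

theorem exists_int_ne_zero_abs_sum_mul_sub_le [Fintype ι] [Fintype κ] (e : ι → κ → ℝ)
    (N : ι → ℕ) {M : ℕ} (hM : 0 < M) (hcard : M ^ Fintype.card κ < ∏ j, (N j + 1)) :
    ∃ (z : ι → ℤ) (P : κ → ℤ), z ≠ 0 ∧ (∀ j, |z j| ≤ N j) ∧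
      ∀ i, |∑ j, z j * e j i - P i| ≤ (M : ℝ)⁻¹ := by
  classical
  have hM' : (0 : ℝ) < M := by exact_mod_cast hM
  let v (y : ι → ℤ) (i : κ) : ℝ := ∑ j, y j * e j i
  let box (y : ι → ℤ) (i : κ) : ℤ := ⌊M * Int.fract (v y i)⌋
  let s : Finset (ι → ℤ) := Fintype.piFinset fun j ↦ Finset.Icc 0 (N j)
  let t : Finset (κ → ℤ) := Fintype.piFinset fun _ ↦ Finset.Ico 0 M
  have hst : t.card < s.card := by
    rw [Fintype.card_piFinset, Fintype.card_piFinset]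
    simpa only [Int.card_Icc, Int.card_Ico, Finset.prod_const, Finset.card_univ, sub_zero,
      Int.toNat_natCast, Int.toNat_natCast_add_one] using hcard
  have hmaps : ∀ y ∈ s, box y ∈ t := fun y _ ↦ Fintype.mem_piFinset.2 fun i ↦ by
    rw [Finset.mem_Ico, Int.floor_nonneg, Int.floor_lt, Int.cast_natCast]
    exact ⟨mul_nonneg hM'.le (Int.fract_nonneg _),
      mul_lt_of_lt_one_right hM' (Int.fract_lt_one _)⟩
  obtain ⟨y, hy, y', hy', hne, hbox⟩ := Finset.exists_ne_map_eq_of_card_lt_of_maps_to hst hmaps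
  refine ⟨y - y', fun i ↦ ⌊v y i⌋ - ⌊v y' i⌋, sub_ne_zero.2 hne, fun j ↦ ?_, fun i ↦ ?_⟩
  · have hj := Finset.mem_Icc.1 (Fintype.mem_piFinset.1 hy j)
    have hj' := Finset.mem_Icc.1 (Fintype.mem_piFinset.1 hy' j)
    rw [Pi.sub_apply, abs_le]
    constructor <;> linarith
  · have hfract : ∑ j, ((y - y') j : ℝ) * e j i - ((⌊v y i⌋ - ⌊v y' i⌋ : ℤ) : ℝ) =
        Int.fract (v y i) - Int.fract (v y' i) := by
      simp only [Int.fract, v, Pi.sub_apply, Int.cast_sub, sub_mul, Finset.sum_sub_distrib]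
      ring
    have hlt := Int.abs_sub_lt_one_of_floor_eq_floor (congrFun hbox i)
    rw [← mul_sub, abs_mul, abs_of_pos hM'] at hlt
    rw [hfract, ← one_div, le_div_iff₀' hM']
    exact hlt.le

theorem natCeil_exp_pow_lt_prod_natFloor_exp [Fintype ι] {U : ℝ} (hU : 0 ≤ U) {m : ℕ} {s : ι → ℝ}
    (h : m * (U + 1) < ∑ j, s j) : ⌈exp U⌉₊ ^ m < ∏ j, (⌊exp (s j)⌋₊ + 1) := by
  have hceil : (⌈exp U⌉₊ : ℝ) ≤ exp (U + 1) := by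
    have hle : (⌈exp U⌉₊ : ℝ) ≤ 2 * exp U := Nat.ceil_le_two_mul (by linarith [one_le_exp hU])
    rw [exp_add, mul_comm]
    exact hle.trans (by gcongr; linarith [add_one_le_exp (1 : ℝ)])
  have hreal : (⌈exp U⌉₊ : ℝ) ^ m < ∏ j, ((⌊exp (s j)⌋₊ : ℝ) + 1) := calc
    (⌈exp U⌉₊ : ℝ) ^ m ≤ exp (U + 1) ^ m := by gcongr
    _ = exp (m * (U + 1)) := (exp_nat_mul _ _).symm
    _ < exp (∑ j, s j) := exp_lt_exp.2 h
    _ = ∏ j, exp (s j) := exp_sum _ _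
    _ ≤ ∏ j, ((⌊exp (s j)⌋₊ : ℝ) + 1) := by
      gcongr with j
      exact (Nat.lt_floor_add_one _).le
  exact_mod_cast hreal

theorem eventually_exists_int_approx [Fintype ι] [Fintype κ] (e : ι → κ → ℝ) {σ : ι → ℝ}
    (hσ : (Fintype.card κ : ℝ) < ∑ j, (σ j + 1)) (C : ℝ) :
    ∀ᶠ U in atTop, ∃ (lam : ι → ℝ) (P : κ → ℤ), lam ≠ 0 ∧ (∀ j, |lam j| ≤ exp (σ j * U)) ∧
      (∀ j, lam j ≠ 0 → exp (C - U) ≤ |lam j|) ∧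
      ∀ i, |∑ j, lam j * e j i - P i| ≤ exp (-U) := by
  set d : ℝ := (Fintype.card κ : ℝ)
  set S : ℝ := ∑ j, (σ j + 1) with hS
  filter_upwards [(tendsto_id.const_mul_atTop (sub_pos.2 hσ)).eventually_gt_atTop
    (d + Fintype.card ι * C), eventually_ge_atTop 0] with U hU hU0
  set M := ⌈exp U⌉₊
  let N (j : ι) : ℕ := ⌊exp ((σ j + 1) * U - C)⌋₊
  have hcard : M ^ Fintype.card κ < ∏ j, (N j + 1) := by
    refine natCeil_exp_pow_lt_prod_natFloor_exp hU0 ?_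
    rw [Finset.sum_sub_distrib, ← Finset.sum_mul, ← hS, Finset.sum_const, Finset.card_univ,
      nsmul_eq_mul]
    rw [id] at hU
    linarith
  obtain ⟨z, P, hz, hzN, hzP⟩ := exists_int_ne_zero_abs_sum_mul_sub_le
    (fun j i ↦ exp (C - U) * e j i) N (Nat.ceil_pos.2 (exp_pos U)) hcard
  have habs (j : ι) : |z j * exp (C - U)| = |(z j : ℝ)| * exp (C - U) := by
    rw [abs_mul, abs_of_pos (exp_pos _)]
  refine ⟨fun j ↦ z j * exp (C - U), P, ?_, fun j ↦ ?_, fun j hj ↦ ?_, fun i ↦ ?_⟩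
  · obtain ⟨j, hj⟩ := Function.ne_iff.1 hz
    exact Function.ne_iff.2 ⟨j, mul_ne_zero (by exact_mod_cast hj) (exp_pos _).ne'⟩
  · have hzj : |(z j : ℝ)| ≤ N j := by exact_mod_cast hzN j
    calc |z j * exp (C - U)| = |(z j : ℝ)| * exp (C - U) := habs j
      _ ≤ exp ((σ j + 1) * U - C) * exp (C - U) := by
        gcongr
        exact hzj.trans (Nat.floor_le (exp_pos _).le)
      _ = exp (σ j * U) := by rw [← exp_add]; ring_nf
  · have hzj : z j ≠ 0 := by exact_mod_cast left_ne_zero_of_mul hj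
    rw [habs]
    exact le_mul_of_one_le_left (exp_pos _).le (by exact_mod_cast Int.one_le_abs hzj)
  · simp only [mul_assoc]
    refine (hzP i).trans ?_
    rw [exp_neg]
    exact inv_anti₀ (exp_pos U) (Nat.le_ceil _)

/-! ### Separating the terms of a linear combination -/

theorem HasDenseScales.exists_separated {x : α → ℝ} {F : Filter α} (hx : HasDenseScales x F)
    (m : ℕ) {D : ℝ} (hD : 0 < D) :
    ∃ ρ > 0, ∀ s ∈ F, ∀ᶠ X in atTop, ∃ n : Fin m → α,
      (∀ i, n i ∈ s ∧ X ≤ x (n i) ∧ x (n i) ≤ (1 + D) * X) ∧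
        Pairwise fun i i' ↦ ρ * X ≤ |x (n i) - x (n i')| := by
  let ρ := D / (3 * m + 1)
  have hρ : 0 < ρ := by positivity
  have hρD : ρ * (3 * m + 1) = D := div_mul_cancel₀ _ (by positivity)
  refine ⟨ρ, hρ, fun s hs ↦ ?_⟩
  filter_upwards [eventually_forall_ge_atTop.2 (hx (ρ / (1 + D)) (by positivity) s hs),
    eventually_ge_atTop 0] with X hX hX0
  let Y (i : Fin m) : ℝ := (1 + (3 * i + 1) * ρ) * X
  have hYD (i : Fin m) : ρ / (1 + D) * Y i ≤ ρ * X := by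
    have hi : ((i : ℕ) : ℝ) + 1 ≤ m := by exact_mod_cast i.2
    have hle : 1 + (3 * i + 1) * ρ ≤ 1 + D := by nlinarith
    rw [div_mul_eq_mul_div, div_le_iff₀ (by positivity), mul_assoc, mul_comm X]
    gcongr
    exact mul_le_mul_of_nonneg_right hle hX0
  have hex (i : Fin m) : ∃ n ∈ s, |x n - Y i| ≤ ρ * X := by
    have hY : X ≤ Y i := le_mul_of_one_le_left hX0 (le_add_of_nonneg_right (by positivity))
    obtain ⟨n, hn, hle⟩ := hX _ hY
    exact ⟨n, hn, hle.trans (hYD i)⟩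
  choose n hns hn using hex
  refine ⟨n, fun i ↦ ⟨hns i, ?_⟩, fun i i' hii' ↦ ?_⟩
  · have hi : ((i : ℕ) : ℝ) + 1 ≤ m := by exact_mod_cast i.2
    have := abs_le.1 (hn i)
    constructor <;> simp only [Y] at this <;> nlinarith [mul_nonneg hρ.le hX0]
  · wlog hlt : i < i' generalizing i i'
    · rw [abs_sub_comm]
      exact this i' i hii'.symm (lt_of_le_of_ne (not_lt.1 hlt) hii'.symm)
    have hi : ((i : ℕ) : ℝ) + 1 ≤ (i' : ℕ) := by exact_mod_cast hlt
    have h₁ := abs_le.1 (hn i)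
    have h₂ := abs_le.1 (hn i')
    rw [abs_sub_comm]
    refine le_abs.2 (.inl ?_)
    simp only [Y] at h₁ h₂
    nlinarith [mul_nonneg hρ.le hX0]

theorem exists_pos_forall_le_abs_sub [Finite ι] {τ : ι → ℝ} (hτ : Function.Injective τ) :
    ∃ s > 0, Pairwise fun a b ↦ s ≤ |τ a - τ b| := by
  obtain ⟨s, hs, hlt⟩ := Pi.exists_forall_pos_add_lt (x := fun _ ↦ 0)
    (y := fun q : {q : ι × ι // q.1 ≠ q.2} ↦ |τ q.1.1 - τ q.1.2|)
    fun q ↦ abs_pos.2 (sub_ne_zero.2 (hτ.ne q.2))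
  exact ⟨s, hs, fun a b hab ↦ by simpa only [zero_add] using (hlt ⟨(a, b), hab⟩).le⟩

theorem exists_pairwise_le_abs_sub_of_card_lt {m : Type*} [Fintype ι] [Fintype m]
    (hm : Fintype.card (ι × ι) < Fintype.card m) {τ : ι → ℝ} {x : m → ℝ} {s r c : ℝ} (hs : 0 ≤ s)
    (hτ : Pairwise fun a b ↦ s ≤ |τ a - τ b|) (hx : Pairwise fun i i' ↦ r ≤ |x i - x i'|)
    (hc : 2 * c < s * r) (g : ι → ℝ) :
    ∃ i, Pairwise fun a b ↦ c ≤ |(g a - τ a * x i) - (g b - τ b * x i)| := by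
  -- If the same pair `(a, b)` were close at `x i` and at `x i'`, subtracting would give
  -- `|τ a - τ b| * |x i - x i'| < 2 * c`.
  by_contra! hcon
  simp only [Pairwise, not_forall, not_le] at hcon
  choose a b hab hlt using hcon
  obtain ⟨i, i', hne, heq⟩ := Fintype.exists_ne_map_eq_of_card_lt (fun i ↦ (a i, b i)) hm
  obtain ⟨ha, hb⟩ := Prod.mk.inj heq
  have hprod : s * r ≤ |(τ (a i) - τ (b i)) * (x i - x i')| := by
    rw [abs_mul]
    exact mul_le_mul_of_nonneg (hτ (hab i)) (hx hne) hs (abs_nonneg _)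
  have hi := hlt i
  have hi' := hlt i'
  rw [← ha, ← hb] at hi'
  rw [abs_lt] at hi hi'
  have hsub : |(τ (a i) - τ (b i)) * (x i - x i')| < 2 * c := by
    rw [abs_lt]
    constructor <;> linarith
  linarith

theorem HasDenseScales.exists_gap [Finite ι] {x : α → ℝ} {F : Filter α}
    (hx : HasDenseScales x F) {τ : ι → ℝ} (hτ : Function.Injective τ) {D : ℝ} (hD : 0 < D) :
    ∃ γ > 0, ∀ s ∈ F, ∀ᶠ X in atTop, ∀ g : ι → ℝ, ∃ n ∈ s, X ≤ x n ∧ x n ≤ (1 + D) * X ∧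
      Pairwise fun a b ↦ γ * x n ≤ |(g a - τ a * x n) - (g b - τ b * x n)| := by
  cases nonempty_fintype ι
  obtain ⟨σ, hσ, hτσ⟩ := exists_pos_forall_le_abs_sub hτ
  obtain ⟨ρ, hρ, hsep⟩ := hx.exists_separated (Fintype.card (ι × ι) + 1) hD
  have hγ : σ * ρ / (4 * (1 + D)) * (1 + D) = σ * ρ / 4 := by field_simp
  refine ⟨σ * ρ / (4 * (1 + D)), by positivity, fun s hs ↦ ?_⟩
  filter_upwards [hsep s hs, eventually_gt_atTop 0] with X ⟨n, hn, hnsep⟩ hX g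
  have hc : 2 * (σ * ρ / 4 * X) < σ * (ρ * X) := by nlinarith [mul_pos (mul_pos hσ hρ) hX]
  obtain ⟨i, hi⟩ := exists_pairwise_le_abs_sub_of_card_lt (by simp) hσ.le hτσ hnsep hc g
  obtain ⟨hns, hXn, hnX⟩ := hn i
  refine ⟨n i, hns, hXn, hnX, fun a b hab ↦ le_trans ?_ (hi hab)⟩
  rw [← hγ, mul_assoc _ (1 + D)]
  gcongr

theorem exists_dominant [Finite ι] {u : ι → ℝ} (hu : ∀ j, 0 ≤ u j) (hne : u ≠ 0) {c : ℝ}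
    (hgap : Pairwise fun a b ↦ u a ≠ 0 → u b ≠ 0 → c ≤ |log (u a) - log (u b)|) :
    ∃ j₀, 0 < u j₀ ∧ (∀ j, u j ≤ u j₀) ∧ ∀ j ≠ j₀, u j ≤ exp (-c) * u j₀ := by
  obtain ⟨i, hi⟩ := Function.ne_iff.1 hne
  have : Nonempty ι := ⟨i⟩
  obtain ⟨j₀, hmax⟩ := Finite.exists_max u
  have hpos : 0 < u j₀ := ((hu i).lt_of_ne' hi).trans_le (hmax i)
  refine ⟨j₀, hpos, hmax, fun j hj ↦ ?_⟩
  rcases (hu j).eq_or_lt' with h0 | hjpos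
  · rw [h0]
    positivity
  have hlog := hgap hj hjpos.ne' hpos.ne'
  rw [abs_of_nonpos (sub_nonpos.2 (log_le_log hjpos (hmax j)))] at hlog
  rw [← exp_log hpos, ← exp_add, ← log_le_iff_le_exp hjpos]
  linarith

theorem exists_critical_scale [Finite ι] (lam : ι → ℝ) {σ : ι → ℝ} (hσ : ∀ j, 0 < σ j)
    {X₀ : ℝ} (hX₀ : 0 ≤ X₀) :
    ∃ X ≥ X₀, (∀ j, |lam j| ≤ exp (σ j * X)) ∧
      (X = X₀ ∨ ∃ j, |lam j| = exp (σ j * X)) := by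
  have hle {j : ι} {X : ℝ} (h : log |lam j| / σ j ≤ X) : |lam j| ≤ exp (σ j * X) :=
    (le_exp_log _).trans (exp_le_exp.2 ((div_le_iff₀' (hσ j)).1 h))
  by_cases hall : ∀ j, log |lam j| / σ j ≤ X₀
  · exact ⟨X₀, le_rfl, fun j ↦ hle (hall j), .inl rfl⟩
  push Not at hall
  obtain ⟨i, hi⟩ := hall
  have : Nonempty ι := ⟨i⟩
  obtain ⟨j, hmax⟩ := Finite.exists_max fun j ↦ log |lam j| / σ j
  have hX : X₀ < log |lam j| / σ j := hi.trans_le (hmax i)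
  refine ⟨log |lam j| / σ j, hX.le, fun i ↦ hle (hmax i), .inr ⟨j, ?_⟩⟩
  have hne : lam j ≠ 0 := by
    intro h0
    rw [h0, abs_zero, log_zero, zero_div] at hX
    exact hX.not_ge hX₀
  rw [mul_div_cancel₀ _ (hσ j).ne', exp_log (abs_pos.2 hne)]

/-! ### Linear forms evaluated at a nearby integer point -/

/-- Estimates, at the scale `exp x` and up to a factor `exp (± δ x)`, for a linear form with integer
coefficients `a`: its coefficients are at most `exp x` and its value at the point `e j` has size
`exp (- τ j x)`. The linear form `L n` of a sequence satisfies them for `x = log (Q n)`. -/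
structure FormBounds [Fintype κ] (a : κ → ℤ) (e : ι → κ → ℝ) (τ : ι → ℝ) (x δ : ℝ) : Prop where
  height (i : κ) : |(a i : ℝ)| ≤ exp ((1 + δ) * x)
  lower (j : ι) : exp (-(τ j + δ) * x) ≤ |∑ i, a i * e j i|
  upper (j : ι) : |∑ i, a i * e j i| ≤ exp (-(τ j - δ) * x)

theorem abs_le_sum_erase_add_abs_sum_sub_intCast [DecidableEq ι] {s : Finset ι} {y : ι → ℝ}
    {S : ℤ} {j₀ : ι} (hj₀ : j₀ ∈ s) (h : |y j₀| ≤ 1 / 2) :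
    |y j₀| ≤ ∑ j ∈ s.erase j₀, |y j| + |∑ j ∈ s, y j - S| := by
  -- Otherwise `|S| < 1`, hence `S = 0`, and the inequality is the triangle inequality.
  by_contra! hlt
  have hsum : |∑ j ∈ s, y j - y j₀| ≤ ∑ j ∈ s.erase j₀, |y j| := by
    rw [← Finset.sum_erase_eq_sub hj₀]
    exact Finset.abs_sum_le_sum_abs _ _
  have hS : |(S : ℝ)| < 1 := calc
    |(S : ℝ)| = |y j₀ + (∑ j ∈ s, y j - y j₀) - (∑ j ∈ s, y j - S)| := by ring_nf
    _ ≤ |y j₀| + |∑ j ∈ s, y j - y j₀| + |∑ j ∈ s, y j - S| :=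
      (abs_sub _ _).trans (by gcongr; exact abs_add_le _ _)
    _ < 1 := by linarith
  have hS0 : S = 0 := Int.abs_lt_one_iff.1 (by exact_mod_cast hS)
  have htri := abs_sub_abs_le_abs_sub (y j₀) (y j₀ - ∑ j ∈ s, y j)
  rw [sub_sub_cancel, abs_sub_comm _ (∑ j ∈ s, y j)] at htri
  rw [hS0, Int.cast_zero, sub_zero] at hlt
  linarith

theorem lt_of_abs_sum_sub_intCast_le [Fintype ι] {y : ι → ℝ} {S : ℤ} {j₀ : ι} {t w d E : ℝ}
    (hE : Fintype.card ι + d + 1 ≤ E) (ht : 0 < t) (hd : 0 ≤ d) (hlower : t / E ≤ |y j₀|)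
    (hupper : |y j₀| ≤ 1 / E) (hothers : ∀ j ≠ j₀, |y j| ≤ t / E ^ 2)
    (hsum : |∑ j, y j - S| ≤ d * w) : t < E ^ 2 * w := by
  classical
  have hι : (1 : ℝ) ≤ Fintype.card ι := by exact_mod_cast Fintype.card_pos_iff.2 ⟨j₀⟩
  have hEpos : 0 < E := by linarith
  by_contra! hcon
  rw [← le_div_iff₀' (by positivity)] at hcon
  have hhalf : |y j₀| ≤ 1 / 2 := hupper.trans (one_div_le_one_div_of_le two_pos (by linarith))
  have hle : E * (t / E ^ 2) ≤ (Fintype.card ι + d) * (t / E ^ 2) := calc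
    E * (t / E ^ 2) = t / E := by field_simp
    _ ≤ ∑ j ∈ Finset.univ.erase j₀, |y j| + |∑ j, y j - S| :=
      hlower.trans (abs_le_sum_erase_add_abs_sum_sub_intCast (Finset.mem_univ j₀) hhalf)
    _ ≤ Fintype.card ι * (t / E ^ 2) + d * (t / E ^ 2) := by
      gcongr
      · refine (Finset.sum_le_card_nsmul _ _ _ fun j hj ↦
          hothers j (Finset.ne_of_mem_erase hj)).trans ?_
        rw [nsmul_eq_mul]
        gcongr
        exact Finset.card_erase_le
      · exact hsum.trans (by gcongr)
    _ = (Fintype.card ι + d) * (t / E ^ 2) := by ring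
  linarith [le_of_mul_le_mul_right hle (by positivity)]

namespace FormBounds

variable [Fintype κ] {a : κ → ℤ} {e : ι → κ → ℝ} {τ : ι → ℝ} {x δ U : ℝ}
  {lam : ι → ℝ} {P : κ → ℤ}

theorem le_abs_mul_sum (ha : FormBounds a e τ x δ) (c : ℝ) (j : ι) :
    |c| * exp (-τ j * x) / exp (δ * x) ≤ |c * ∑ i, a i * e j i| := by
  rw [abs_mul, mul_div_assoc, ← exp_sub]
  gcongr
  exact (exp_le_exp.2 (by linarith)).trans (ha.lower j)

theorem abs_mul_sum_le (ha : FormBounds a e τ x δ) (c : ℝ) (j : ι) :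
    |c * ∑ i, a i * e j i| ≤ |c| * exp (-τ j * x) * exp (δ * x) := by
  rw [abs_mul, mul_assoc, ← exp_add]
  gcongr
  exact (ha.upper j).trans (exp_le_exp.2 (by linarith))

variable [Fintype ι]

theorem abs_sum_sub_le (ha : FormBounds a e τ x δ)
    (hP : ∀ i, |∑ j, lam j * e j i - P i| ≤ exp (-U)) :
    |∑ j, lam j * ∑ i, a i * e j i - ((∑ i, a i * P i : ℤ) : ℝ)| ≤
      Fintype.card κ * exp ((1 + δ) * x - U) := by
  have hswap : ∑ j, lam j * ∑ i, a i * e j i - ((∑ i, a i * P i : ℤ) : ℝ) =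
      ∑ i, a i * (∑ j, lam j * e j i - P i) := by
    push_cast
    simp only [mul_sub, Finset.mul_sum, Finset.sum_sub_distrib]
    rw [Finset.sum_comm]
    simp only [mul_left_comm]
  rw [hswap, ← nsmul_eq_mul, ← Finset.card_univ]
  refine (Finset.abs_sum_le_sum_abs _ _).trans (Finset.sum_le_card_nsmul _ _ _ fun i _ ↦ ?_)
  rw [abs_mul, sub_eq_add_neg ((1 + δ) * x), exp_add]
  exact mul_le_mul (ha.height i) (hP i) (abs_nonneg _) (exp_pos _).le

theorem dominant_lt (ha : FormBounds a e τ x δ)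
    (hlarge : Fintype.card ι + Fintype.card κ + 1 ≤ exp (δ * x))
    (hP : ∀ i, |∑ j, lam j * e j i - P i| ≤ exp (-U)) {j₀ : ι}
    (hpos : 0 < |lam j₀| * exp (-τ j₀ * x))
    (hle : |lam j₀| * exp (-τ j₀ * x) ≤ exp (-(2 * δ * x)))
    (hdom : ∀ j ≠ j₀, |lam j| * exp (-τ j * x) ≤
      exp (-(3 * δ * x)) * (|lam j₀| * exp (-τ j₀ * x))) :
    |lam j₀| * exp (-τ j₀ * x) < exp ((1 + 3 * δ) * x - U) := by
  have hE (m : ℕ) : exp (-(m * δ * x)) = (exp (δ * x) ^ m)⁻¹ := by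
    rw [← exp_nat_mul, ← exp_neg, mul_assoc]
  have hE2 := hE 2
  have hE3 := hE 3
  push_cast at hE2 hE3
  rw [hE2] at hle
  simp only [hE3] at hdom
  have hlt := lt_of_abs_sum_sub_intCast_le hlarge hpos (Nat.cast_nonneg _)
    (ha.le_abs_mul_sum (lam j₀) j₀) (j₀ := j₀) (y := fun j ↦ lam j * ∑ i, a i * e j i) ?_ ?_
    (ha.abs_sum_sub_le hP)
  · refine hlt.trans_eq ?_
    rw [← exp_nat_mul, ← exp_add]
    push_cast
    ring_nf
  · calc |lam j₀ * ∑ i, a i * e j₀ i| ≤ (exp (δ * x) ^ 2)⁻¹ * exp (δ * x) :=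
          (ha.abs_mul_sum_le _ _).trans (by gcongr)
      _ = 1 / exp (δ * x) := by field_simp
  · intro j hj
    calc |lam j * ∑ i, a i * e j i| ≤
          (exp (δ * x) ^ 3)⁻¹ * (|lam j₀| * exp (-τ j₀ * x)) * exp (δ * x) :=
          (ha.abs_mul_sum_le _ _).trans (by gcongr ?_ * _; exact hdom j hj)
      _ = |lam j₀| * exp (-τ j₀ * x) / exp (δ * x) ^ 2 := by field_simp

theorem abs_mul_exp_lt (ha : FormBounds a e τ x δ)
    (hlarge : Fintype.card ι + Fintype.card κ + 1 ≤ exp (δ * x))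
    (hP : ∀ i, |∑ j, lam j * e j i - P i| ≤ exp (-U)) (hlam : lam ≠ 0)
    (hle : ∀ j, |lam j| ≤ exp ((τ j - 2 * δ) * x))
    (hgap : Pairwise fun i j ↦
      3 * δ * x ≤ |(log |lam i| - τ i * x) - (log |lam j| - τ j * x)|) (j : ι) :
    |lam j| * exp (-τ j * x) < exp ((1 + 3 * δ) * x - U) := by
  have hne (i : ι) : |lam i| * exp (-τ i * x) ≠ 0 ↔ lam i ≠ 0 := by
    rw [mul_ne_zero_iff_right (exp_pos _).ne', abs_ne_zero]
  have hlog (i : ι) (hi : lam i ≠ 0) :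
      log (|lam i| * exp (-τ i * x)) = log |lam i| - τ i * x := by
    rw [log_mul (abs_ne_zero.2 hi) (exp_pos _).ne', log_exp, neg_mul, sub_eq_add_neg]
  obtain ⟨j₀, hpos, hmax, hdom⟩ := exists_dominant
    (u := fun i ↦ |lam i| * exp (-τ i * x)) (fun i ↦ by positivity)
    (by
      obtain ⟨i, hi⟩ := Function.ne_iff.1 hlam
      exact Function.ne_iff.2 ⟨i, (hne i).2 hi⟩)
    (fun i i' hii' hi hi' ↦ by
      rw [hlog i ((hne i).1 hi), hlog i' ((hne i').1 hi')]
      exact hgap hii')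
  refine (hmax j).trans_lt (ha.dominant_lt hlarge hP hpos ?_ hdom)
  calc |lam j₀| * exp (-τ j₀ * x) ≤ exp ((τ j₀ - 2 * δ) * x) * exp (-τ j₀ * x) := by
        gcongr
        exact hle j₀
    _ = exp (-(2 * δ * x)) := by rw [← exp_add]; ring_nf

end FormBounds

-- The two conditions on `c` bound `U / X` below by `(τ - 2 * δ) / (τ - ε)`, and by `hε` this is at
-- least the ratio required when `y` is as large as `(1 + D) * X`.
theorem exp_sub_le_of_eq_exp {c τ ε D δ U X y : ℝ} (hX : 0 < X) (hU : 0 < U) (hδ : 0 ≤ δ)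
    (hδτ : 2 * δ < τ) (hyX : y ≤ (1 + D) * X)
    (hε : ((1 + 3 * δ + τ) * (1 + D) - (τ - 2 * δ)) * (τ - ε) ≤ τ - 2 * δ)
    (hc : c = exp ((τ - 2 * δ) * X)) (hcU : c ≤ exp ((τ - ε) * U)) :
    exp ((1 + 3 * δ) * y - U) ≤ c * exp (-τ * y) := by
  have hle : (τ - 2 * δ) * X ≤ (τ - ε) * U := exp_le_exp.1 (hc ▸ hcU)
  have hτε : 0 < τ - ε :=
    pos_of_mul_pos_left ((mul_pos (sub_pos.2 hδτ) hX).trans_le hle) hU.le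
  have hU' : ((1 + 3 * δ + τ) * (1 + D) - (τ - 2 * δ)) * X ≤ U := by
    refine le_of_mul_le_mul_left ?_ hτε
    refine le_trans ?_ hle
    rw [← mul_assoc, mul_comm (τ - ε)]
    gcongr
  have hy : (1 + 3 * δ + τ) * y ≤ (1 + 3 * δ + τ) * ((1 + D) * X) :=
    mul_le_mul_of_nonneg_left hyX (by linarith)
  rw [hc, ← exp_add, exp_le_exp]
  linarith

theorem eventually_nhdsGT_zero_lt {f g : ℝ → ℝ} (hf : Continuous f) (hg : Continuous g)
    (h : f 0 < g 0) : ∀ᶠ t in 𝓝[>] 0, f t < g t :=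
  (hf.continuousAt.eventually_lt hg.continuousAt h).filter_mono nhdsWithin_le_nhds

theorem exists_window_width [Finite ι] (τ : ι → ℝ) {ε : ℝ} (hε : 0 < ε) :
    ∃ D > 0, D ≤ 1 ∧ ∀ j, ((1 + τ j) * (1 + D) - τ j) * (τ j - ε) < τ j := by
  have hev : ∀ᶠ D in 𝓝[>] 0, ∀ j, ((1 + τ j) * (1 + D) - τ j) * (τ j - ε) < τ j :=
    eventually_all.2 fun j ↦ eventually_nhdsGT_zero_lt (by fun_prop) (by fun_prop) (by linarith)
  obtain ⟨D, hDε, hD, hD1⟩ := (hev.and (Ioc_mem_nhdsGT one_pos)).exists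
  exact ⟨D, hD, hD1, hDε⟩

theorem exists_precision [Finite ι] {τ : ι → ℝ} (hτ : ∀ j, 0 < τ j) {ε D γ : ℝ} (hγ : 0 < γ)
    (hD : ∀ j, ((1 + τ j) * (1 + D) - τ j) * (τ j - ε) < τ j) :
    ∃ δ > 0, 3 * δ ≤ γ ∧ 3 * δ ≤ 1 ∧ ∀ j, 2 * δ < τ j ∧
      ((1 + 3 * δ + τ j) * (1 + D) - (τ j - 2 * δ)) * (τ j - ε) ≤ τ j - 2 * δ := by
  have hev : ∀ᶠ δ in 𝓝[>] 0, 3 * δ < γ ∧ 3 * δ < 1 ∧ ∀ j, 2 * δ < τ j ∧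
      ((1 + 3 * δ + τ j) * (1 + D) - (τ j - 2 * δ)) * (τ j - ε) < τ j - 2 * δ := by
    simp only [eventually_and, eventually_all]
    refine ⟨?_, ?_, fun j ↦ ⟨?_, ?_⟩⟩ <;>
      refine eventually_nhdsGT_zero_lt (by fun_prop) (by fun_prop) ?_ <;>
      simp [hγ, hτ, hD]
  obtain ⟨δ, hδ, h1, h2, h3⟩ := (eventually_mem_nhdsWithin.and hev).exists
  exact ⟨δ, hδ, h1.le, h2.le, fun j ↦ ⟨(h3 j).1, (h3 j).2.le⟩⟩

theorem exists_critical_index [Fintype ι] {τ lam : ι → ℝ} (hτ : ∀ j, 0 < τ j) {ε D δ U X₀ : ℝ}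
    (hD : D ≤ 1) (hδ : 0 ≤ δ) (hδ1 : 3 * δ ≤ 1)
    (hparam : ∀ j, 2 * δ < τ j ∧
      ((1 + 3 * δ + τ j) * (1 + D) - (τ j - 2 * δ)) * (τ j - ε) ≤ τ j - 2 * δ)
    (hX₀ : 0 < X₀) (hU : 0 < U) (hlam : lam ≠ 0) (hupper : ∀ j, |lam j| ≤ exp ((τ j - ε) * U))
    (hlower : ∀ j, lam j ≠ 0 → exp (2 * (2 + ∑ j, τ j) * X₀ - U) ≤ |lam j|) :
    ∃ X ≥ X₀, (∀ j, |lam j| ≤ exp ((τ j - 2 * δ) * X)) ∧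
      ∃ j, ∀ y ≤ (1 + D) * X, exp ((1 + 3 * δ) * y - U) ≤ |lam j| * exp (-τ j * y) := by
  obtain ⟨X, hX, hle, rfl | ⟨j, hj⟩⟩ :=
    exists_critical_scale lam (fun j ↦ sub_pos.2 (hparam j).1) hX₀.le
  · obtain ⟨j, hj⟩ := Function.ne_iff.1 hlam
    refine ⟨X, hX, hle, j, fun y hy ↦ ?_⟩
    have hτj : τ j ≤ ∑ j, τ j := Finset.single_le_sum (fun i _ ↦ (hτ i).le) (Finset.mem_univ j)
    have hy2 : (1 + 3 * δ + τ j) * y ≤ (2 + ∑ j, τ j) * (2 * X) := calc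
      (1 + 3 * δ + τ j) * y ≤ (1 + 3 * δ + τ j) * (2 * X) := by
        have := hτ j
        gcongr
        nlinarith
      _ ≤ (2 + ∑ j, τ j) * (2 * X) := by
        gcongr
        linarith
    calc exp ((1 + 3 * δ) * y - U) ≤ exp (2 * (2 + ∑ j, τ j) * X - U) * exp (-τ j * y) := by
          rw [← exp_add, exp_le_exp]
          linarith
      _ ≤ |lam j| * exp (-τ j * y) := by
          gcongr
          exact hlower j hj
  · exact ⟨X, hX, hle, j, fun y hy ↦ exp_sub_le_of_eq_exp (hX₀.trans_le hX) hU hδ (hparam j).1 hy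
      (hparam j).2 hj (hupper j)⟩

theorem HasDenseScales.card_add_sum_le_card [Fintype ι] [Fintype κ] {x : α → ℝ} {F : Filter α}
    (hx : HasDenseScales x F) {a : α → κ → ℤ} {e : ι → κ → ℝ} {τ : ι → ℝ} (hτ : ∀ j, 0 < τ j)
    (hτinj : Function.Injective τ) (ha : ∀ δ > 0, ∀ᶠ n in F, FormBounds (a n) e τ (x n) δ) :
    Fintype.card ι + ∑ j, τ j ≤ Fintype.card κ := by
  by_contra! hlt
  obtain ⟨ε, hε, hsum⟩ : ∃ ε > 0, (Fintype.card κ : ℝ) < ∑ j, (τ j - ε + 1) := by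
    have hlt' : (Fintype.card κ : ℝ) < ∑ j, (τ j - 0 + 1) := by
      simpa [Finset.sum_add_distrib, add_comm] using hlt
    exact (eventually_mem_nhdsWithin.and
      (eventually_nhdsGT_zero_lt continuous_const (by fun_prop) hlt')).exists
  obtain ⟨D, hD, hD1, hDε⟩ := exists_window_width τ hε
  obtain ⟨γ, hγ, hgap⟩ := hx.exists_gap hτinj hD
  obtain ⟨δ, hδ, hδγ, hδ1, hparam⟩ := exists_precision hτ hγ hDε
  have hexp : Tendsto (fun X ↦ exp (δ * X)) atTop atTop :=
    tendsto_exp_atTop.comp (tendsto_id.const_mul_atTop hδ)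
  obtain ⟨X₀, hX₀⟩ := eventually_atTop.1 <| (hgap _ (ha δ hδ)).and <|
    (hexp.eventually_ge_atTop (Fintype.card ι + Fintype.card κ + 1)).and (eventually_gt_atTop 0)
  obtain ⟨U, ⟨lam, P, hlam, hupper, hlower, hP⟩, hU⟩ := ((eventually_exists_int_approx e hsum
    (2 * (2 + ∑ j, τ j) * X₀)).and (eventually_gt_atTop 0)).exists
  obtain ⟨X, hX, hle, j, hj⟩ := exists_critical_index hτ hD1 hδ.le hδ1 hparam
    (hX₀ X₀ le_rfl).2.2 hU hlam hupper hlower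
  obtain ⟨hscale, hlarge, hXpos⟩ := hX₀ X hX
  obtain ⟨n, hn, hXn, hnX, hgapn⟩ := hscale fun j ↦ log |lam j|
  refine (hj (x n) hnX).not_gt (FormBounds.abs_mul_exp_lt hn ?_ hP hlam (fun i ↦ ?_) ?_ j)
  · exact hlarge.trans (exp_le_exp.2 (by gcongr))
  · refine (hle i).trans (exp_le_exp.2 ?_)
    have := (hparam i).1
    gcongr
  · exact hgapn.mono fun i i' h ↦ le_trans (by gcongr; linarith) h

/-! ### Rational subspaces -/

theorem eventually_mul_exp_le {x f : α → ℝ} {F : Filter α} (hx : Tendsto x F atTop)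
    (hf : Tendsto f F (𝓝 0)) (C : ℝ) {δ : ℝ} (hδ : 0 < δ) :
    ∀ᶠ n in F, C * exp (f n * x n) ≤ exp (δ * x n) := by
  filter_upwards [(hx.const_mul_atTop (half_pos hδ)).eventually
    (tendsto_exp_atTop.eventually_ge_atTop C), hf.eventually_le_const (half_pos hδ),
    hx.eventually_ge_atTop 0] with n hC hfn hxn
  calc C * exp (f n * x n) ≤ exp (δ / 2 * x n) * exp (δ / 2 * x n) := by gcongr
    _ = exp (δ * x n) := by rw [← exp_add]; ring_nf

theorem eventually_formBounds [Finite ι] [Fintype κ] {F : Filter α} {x θ : α → ℝ}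
    {ε u : ι → α → ℝ} {a : α → κ → ℤ} {e : ι → κ → ℝ} {τ : ι → ℝ} (hx : Tendsto x F atTop)
    (hε : ∀ j, Tendsto (ε j) F (𝓝 0)) (hθ : Tendsto θ F (𝓝 0)) {c C : ℝ} (hc : 0 < c)
    (hu : ∀ j, ∀ᶠ n in F, c ≤ |u j n| ∧ |u j n| ≤ C)
    (hL : ∀ᶠ n in F, ∀ j, |∑ i, a n i * e j i| = exp (x n * (-τ j + ε j n)) * |u j n|)
    (ha : ∀ᶠ n in F, ∀ i, |(a n i : ℝ)| ≤ exp (x n * (1 + θ n))) {δ : ℝ} (hδ : 0 < δ) :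
    ∀ᶠ n in F, FormBounds (a n) e τ (x n) δ := by
  have hlower : ∀ᶠ n in F, ∀ j, c⁻¹ * exp (-ε j n * x n) ≤ exp (δ * x n) :=
    eventually_all.2 fun j ↦ eventually_mul_exp_le hx (neg_zero (G := ℝ) ▸ (hε j).neg) _ hδ
  have hupper : ∀ᶠ n in F, ∀ j, C * exp (ε j n * x n) ≤ exp (δ * x n) :=
    eventually_all.2 fun j ↦ eventually_mul_exp_le hx (hε j) _ hδ
  filter_upwards [hlower, hupper, eventually_mul_exp_le hx hθ 1 hδ, eventually_all.2 hu, hL, ha]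
    with n hlower hupper hheight hu hL ha
  refine ⟨fun i ↦ ?_, fun j ↦ ?_, fun j ↦ ?_⟩
  · calc |(a n i : ℝ)| ≤ exp (x n) * (1 * exp (θ n * x n)) := by
          rw [one_mul, ← exp_add]; convert ha i using 2; ring
      _ ≤ exp (x n) * exp (δ * x n) := by gcongr
      _ = exp ((1 + δ) * x n) := by rw [← exp_add]; ring_nf
  · rw [hL]
    calc exp (-(τ j + δ) * x n) = exp (-(τ j * x n)) * (exp (δ * x n))⁻¹ := by
          rw [← exp_neg, ← exp_add]; ring_nf
      _ ≤ exp (-(τ j * x n)) * (c⁻¹ * exp (-ε j n * x n))⁻¹ := by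
          gcongr
          exact hlower j
      _ = exp (x n * (-τ j + ε j n)) * c := by
          rw [mul_inv, inv_inv, ← exp_neg, mul_left_comm, ← exp_add, mul_comm]; ring_nf
      _ ≤ exp (x n * (-τ j + ε j n)) * |u j n| := by
          gcongr
          exact (hu j).1
  · rw [hL]
    calc exp (x n * (-τ j + ε j n)) * |u j n| ≤ exp (x n * (-τ j + ε j n)) * C := by
          gcongr
          exact (hu j).2
      _ = exp (-(τ j * x n)) * (C * exp (ε j n * x n)) := by
          rw [mul_left_comm, ← exp_add, mul_comm]; ring_nf
      _ ≤ exp (-(τ j * x n)) * exp (δ * x n) := by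
          gcongr
          exact hupper j
      _ = exp (-(τ j - δ) * x n) := by rw [← exp_add]; ring_nf

theorem FormBounds.of_int_coordinates {κ' : Type*} [Fintype κ] [Fintype κ'] {a : κ → ℤ}
    {e : ι → κ → ℝ} {τ : ι → ℝ} {x δ : ℝ} (ha : FormBounds a e τ x δ) {w : κ' → κ → ℤ}
    {c : ι → κ' → ℝ} (he : ∀ j t, e j t = ∑ i, c j i * w i t) (hδx : 0 ≤ δ * x)
    (hw : ∀ i, ∑ t, |(w i t : ℝ)| ≤ exp (δ * x)) :
    FormBounds (fun i ↦ ∑ t, a t * w i t) c τ x (2 * δ) := by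
  have heval (j : ι) : ∑ i, ((∑ t, a t * w i t : ℤ) : ℝ) * c j i = ∑ t, a t * e j t := by
    simp only [he, Finset.mul_sum, Int.cast_sum, Int.cast_mul, Finset.sum_mul]
    rw [Finset.sum_comm]
    exact Finset.sum_congr rfl fun t _ ↦ Finset.sum_congr rfl fun i _ ↦ by ring
  refine ⟨fun i ↦ ?_, fun j ↦ ?_, fun j ↦ ?_⟩
  · calc |((∑ t, a t * w i t : ℤ) : ℝ)| ≤ ∑ t, |(a t * w i t : ℝ)| := by
          push_cast
          exact Finset.abs_sum_le_sum_abs _ _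
      _ ≤ ∑ t, exp ((1 + δ) * x) * |(w i t : ℝ)| := by
          gcongr with t
          rw [abs_mul]
          gcongr
          exact ha.height t
      _ ≤ exp ((1 + δ) * x) * exp (δ * x) := by
          rw [← Finset.mul_sum]
          gcongr
          exact hw i
      _ = exp ((1 + 2 * δ) * x) := by rw [← exp_add]; ring_nf
  · rw [heval]
    exact (exp_le_exp.2 (by linarith)).trans (ha.lower j)
  · rw [heval]
    exact (ha.upper j).trans (exp_le_exp.2 (by linarith))

theorem eventually_formBounds_int_coordinates {κ' : Type*} [Fintype κ] [Fintype κ']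
    {F : Filter α} {x : α → ℝ} (hx : Tendsto x F atTop) {a : α → κ → ℤ} {e : ι → κ → ℝ}
    {τ : ι → ℝ} {δ : ℝ} (hδ : 0 < δ) (ha : ∀ᶠ n in F, FormBounds (a n) e τ (x n) (δ / 2))
    {w : κ' → κ → ℤ} {c : ι → κ' → ℝ} (he : ∀ j t, e j t = ∑ i, c j i * w i t) :
    ∀ᶠ n in F, FormBounds (fun i ↦ ∑ t, a n t * w i t) c τ (x n) δ := by
  have hw : ∀ᶠ n in F, ∀ i, ∑ t, |(w i t : ℝ)| ≤ exp (δ / 2 * x n) :=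
    eventually_all.2 fun i ↦ (hx.const_mul_atTop (half_pos hδ)).eventually
      (tendsto_exp_atTop.eventually_ge_atTop _)
  filter_upwards [ha, hw, hx.eventually_ge_atTop 0] with n han hwn hxn
  have hmap := han.of_int_coordinates he (by positivity) hwn
  rwa [mul_div_cancel₀ δ two_ne_zero] at hmap

theorem exists_int_coordinates_of_mem_span [Finite κ] {s : Set (EuclideanSpace ℝ κ)}
    (hs : ∀ v ∈ s, ∀ t, ∃ q : ℚ, v t = q) :
    ∃ w : Fin (Module.finrank ℝ (Submodule.span ℝ s)) → κ → ℤ, ∀ v ∈ Submodule.span ℝ s,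
      ∃ c : Fin (Module.finrank ℝ (Submodule.span ℝ s)) → ℝ, ∀ t, v t = ∑ i, c i * w i t := by
  obtain ⟨f, hfs, hspan, -⟩ := Submodule.exists_fun_fin_finrank_span_eq ℝ s
  choose q hq using fun i ↦ hs (f i) (hfs i)
  choose N hN using fun i ↦
    IsLocalization.exist_integer_multiples_of_finite (nonZeroDivisors ℤ) (q i)
  choose w hw using hN
  refine ⟨w, fun v hv ↦ ?_⟩
  rw [← hspan, Submodule.mem_span_range_iff_exists_fun] at hv
  obtain ⟨c, rfl⟩ := hv
  refine ⟨fun i ↦ c i / (N i : ℤ), fun t ↦ ?_⟩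
  have hNw (i : Fin _) : (w i t : ℝ) = (N i : ℤ) * f i t := by
    rw [hq]
    have := hw i t
    rw [eq_intCast, zsmul_eq_mul] at this
    exact_mod_cast this
  have hN0 (i : Fin _) : (((N i : ℤ) : ℤ) : ℝ) ≠ 0 :=
    Int.cast_ne_zero.2 (nonZeroDivisors.coe_ne_zero (N i))
  simp only [hNw, WithLp.ofLp_sum, WithLp.ofLp_smul, Finset.sum_apply, Pi.smul_apply, smul_eq_mul]
  exact Finset.sum_congr rfl fun i _ ↦ by field_simp [hN0 i]

theorem eventually_abs_add_mem_Icc {F : Filter α} {u η : α → ℝ} {c C : ℝ} (hc : 0 < c)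
    (hu : ∀ᶠ n in F, c ≤ |u n| ∧ |u n| ≤ C) (hη : Tendsto η F (𝓝 0)) :
    ∀ᶠ n in F, c / 2 ≤ |u n + η n| ∧ |u n + η n| ≤ C + c / 2 := by
  have hη' : ∀ᶠ n in F, |η n| ≤ c / 2 :=
    (abs_zero (α := ℝ) ▸ hη.abs).eventually_le_const (half_pos hc)
  filter_upwards [hu, hη'] with n hun hηn
  have htri := abs_sub_abs_le_abs_add (u n) (η n)
  constructor <;> linarith [abs_add_le (u n) (η n)]

theorem stmt3_general [Fintype ι] [Fintype κ] {e : ι → EuclideanSpace ℝ κ} {τ ω φ : ι → ℝ}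
    (hτ : ∀ j, 0 < τ j) (hτinj : Function.Injective τ)
    (hosc : ∃ n : ℕ, ∀ j, cos (n * ω j + φ j) ≠ 0)
    {Q : ℕ → ℝ} (hQ : Tendsto Q atTop atTop)
    (hratio : Tendsto (fun n ↦ log (Q (n + 1)) / log (Q n)) atTop (𝓝 1))
    {l : ℕ → κ → ℤ} {ε η : ι → ℕ → ℝ} {θ : ℕ → ℝ}
    (hε : ∀ j, Tendsto (ε j) atTop (𝓝 0)) (hη : ∀ j, Tendsto (η j) atTop (𝓝 0))
    (hθ : Tendsto θ atTop (𝓝 0))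
    (hL : ∀ᶠ n in atTop, ∀ j, |∑ i, (l n i : ℝ) * e j i| =
      Q n ^ (-τ j + ε j n) * |cos (n * ω j + φ j) + η j n|)
    (hl : ∀ᶠ n in atTop, ∀ i, |(l n i : ℝ)| ≤ Q n ^ (1 + θ n))
    {F : Submodule ℝ (EuclideanSpace ℝ κ)}
    (hF : ∃ s : Set (EuclideanSpace ℝ κ),
      (∀ v ∈ s, ∀ i, ∃ q : ℚ, v i = q) ∧ Submodule.span ℝ s = F)
    (heF : ∀ j, e j ∈ F) :
    Fintype.card ι + ∑ j, τ j ≤ Module.finrank ℝ F := by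
  obtain ⟨s, hs, rfl⟩ := hF
  obtain ⟨w, hw⟩ := exists_int_coordinates_of_mem_span hs
  choose b hb using fun j ↦ hw (e j) (heF j)
  obtain ⟨n₀, hn₀⟩ := hosc
  obtain ⟨c, hc, hG⟩ := exists_isSyndetic_setOf_le_abs_cos ω φ hn₀
  set G := {n : ℕ | ∀ j, c ≤ |cos (n * ω j + φ j)|}
  have hGle : atTop ⊓ 𝓟 G ≤ atTop := inf_le_left
  have hx : Tendsto (fun n ↦ log (Q n)) atTop atTop := tendsto_log_atTop.comp hQ
  have hcos (j : ι) : ∀ᶠ n : ℕ in atTop ⊓ 𝓟 G, c ≤ |cos (n * ω j + φ j)| ∧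
      |cos (n * ω j + φ j)| ≤ 1 :=
    eventually_inf_principal.2 (.of_forall fun n hn ↦ ⟨hn j, abs_cos_le_one _⟩)
  have hform {δ : ℝ} (hδ : 0 < δ) : ∀ᶠ n in atTop ⊓ 𝓟 G,
      FormBounds (l n) (fun j i ↦ e j i) τ (log (Q n)) δ := by
    refine eventually_formBounds (hx.mono_left hGle) (fun j ↦ (hε j).mono_left hGle)
      (hθ.mono_left hGle) (half_pos hc)
      (fun j ↦ eventually_abs_add_mem_Icc hc (hcos j) ((hη j).mono_left hGle)) ?_ ?_ hδ
    · filter_upwards [hGle hL, hGle (hQ.eventually_gt_atTop 0)] with n hLn hQn j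
      rw [hLn, rpow_def_of_pos hQn]
    · filter_upwards [hGle hl, hGle (hQ.eventually_gt_atTop 0)] with n hln hQn i
      rw [← rpow_def_of_pos hQn]
      exact hln i
  have hcoord {δ : ℝ} (hδ : 0 < δ) := eventually_formBounds_int_coordinates
    (hx.mono_left hGle) hδ (hform (half_pos hδ)) hb
  simpa using (hasDenseScales_of_tendsto_div hx hratio hG).card_add_sum_le_card hτ hτinj
    fun _ ↦ hcoord

/-- Under hypotheses (H), every subspace F of ℝ^p defined over ℚ containing e_1,…,e_k
satisfies dim F ≥ k + τ_1 + … + τ_k. -/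
theorem stmt3
    (k p : ℕ) (hk : 1 ≤ k) (hkp : k ≤ p - 1)
    (e : Fin k → EuclideanSpace ℝ (Fin p))
    (τs ωs φs : Fin k → ℝ)
    (hτpos : ∀ j, 0 < τs j) (hτinj : Function.Injective τs)
    (hosc : {n : ℕ | ∀ j : Fin k, ∀ m : ℤ,
      (n : ℝ) * ωs j + φs j ≠ Real.pi / 2 + m * Real.pi}.Infinite)
    (Q : ℕ → ℕ) (hQmono : StrictMono Q) (hQpos : ∀ n, 0 < Q n)
    (hQgrowth :
      (∃ M : ℝ, 0 < M ∧ ∀ n : ℕ, 1 ≤ n →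
        Real.log (Q (n + 1)) ≤ (1 + M / n) * Real.log (Q n)) ∨
      ((∀ j, ωs j = 0) ∧
        Filter.Tendsto (fun n => Real.log (Q (n + 1)) / Real.log (Q n))
          Filter.atTop (nhds 1)))
    (l : ℕ → Fin p → ℤ)
    (εs ηs : Fin k → ℕ → ℝ) (θs : ℕ → ℝ)
    (hεs : ∀ j, Filter.Tendsto (εs j) Filter.atTop (nhds 0))
    (hηs : ∀ j, Filter.Tendsto (ηs j) Filter.atTop (nhds 0))
    (hθs : Filter.Tendsto θs Filter.atTop (nhds 0))
    (hL : ∀ n : ℕ, 1 ≤ n → ∀ j,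
      |∑ i, (l n i : ℝ) * e j i| =
        (Q n : ℝ) ^ (-τs j + εs j n) * |Real.cos ((n : ℝ) * ωs j + φs j) + ηs j n|)
    (hl : ∀ n : ℕ, 1 ≤ n → ∀ i, |(l n i : ℝ)| ≤ (Q n : ℝ) ^ (1 + θs n))
    :
    ∀ F : Submodule ℝ (EuclideanSpace ℝ (Fin p)),
      (∃ s : Set (EuclideanSpace ℝ (Fin p)),
        (∀ v ∈ s, ∀ i, ∃ q : ℚ, v i = (q : ℝ)) ∧ Submodule.span ℝ s = F) →
      (∀ j, e j ∈ F) →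
      (k : ℝ) + ∑ j, τs j ≤ (Module.finrank ℝ F : ℝ) := by
  intro F hF heF
  have hQinf : Tendsto (fun n ↦ (Q n : ℝ)) atTop atTop :=
    tendsto_natCast_atTop_atTop.comp hQmono.tendsto_atTop
  have hratio : Tendsto (fun n ↦ log (Q (n + 1)) / log (Q n)) atTop (𝓝 1) := by
    rcases hQgrowth with ⟨M, -, hM⟩ | ⟨-, hr⟩
    · refine tendsto_div_of_le_one_add_div (x := fun n ↦ log (Q n)) (fun m n hmn ↦ ?_)
        (fun n hn ↦ log_pos ?_) hM
      · exact log_le_log (by exact_mod_cast hQpos m) (by exact_mod_cast hQmono.monotone hmn)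
      · exact_mod_cast (show 1 ≤ Q 0 from hQpos 0).trans_lt (hQmono (by omega : 0 < n))
    · exact hr
  have hcos : ∃ n : ℕ, ∀ j, cos (n * ωs j + φs j) ≠ 0 := by
    obtain ⟨n, hn⟩ := hosc.nonempty
    refine ⟨n, fun j hj ↦ ?_⟩
    obtain ⟨m, hm⟩ := cos_eq_zero_iff.1 hj
    exact hn j m (by linarith)
  simpa only [Fintype.card_fin] using stmt3_general hτpos hτinj hcos hQinf hratio hεs hηs hθs
    ((eventually_ge_atTop 1).mono hL) ((eventually_ge_atTop 1).mono hl) hF heF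
end

section
/- Assume hypotheses (H). Then the vectors e_1,…,e_k are linearly independent over ℝ in ℝ^p, and the ℝ-subspace they span intersects ℚ^p only in the zero vector. -/
/-!
Evaluating the forms `L n` gives a linear map `E → Germ atTop ℝ`. The vectors `e j` are sent to
germs of size `Q n ^ (-τ j + o(1))` times a bounded factor not tending to `0`; as the exponents
`τ j` are distinct, the term of least exponent cannot be cancelled by the others, so these germs
are linearly independent. Hence so are the `e j`, and evaluation is injective on their span.
On a rational vector `x` of the span, `L n x` tends to `0` and has a denominator independent
of `n`, so it vanishes for large `n`; by injectivity `x = 0`.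
-/

open Filter Topology Asymptotics

section EvalGerm

variable {α 𝕜 E F : Type*} {l : Filter α} [Semiring 𝕜] [AddCommMonoid E] [Module 𝕜 E]
  [AddCommMonoid F] [Module 𝕜 F]

/-- Evaluation of a family of linear maps along a filter: `x` is sent to the germ of `a ↦ Λ a x`.
Asymptotic relations between the values `Λ a x` become linear relations in its range. -/
def evalGerm (l : Filter α) (Λ : α → E →ₗ[𝕜] F) : E →ₗ[𝕜] Germ l F where
  toFun x := ((fun a => Λ a x : α → F) : Germ l F)
  map_add' x y := by simp only [map_add]; rfl
  map_smul' c x := by simp only [map_smul]; rfl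

theorem mem_ker_evalGerm {Λ : α → E →ₗ[𝕜] F} {x : E} :
    x ∈ LinearMap.ker (evalGerm l Λ) ↔ ∀ᶠ a in l, Λ a x = 0 :=
  Germ.coe_eq

theorem tendsto_zero_of_mem_span [TopologicalSpace F] [ContinuousAdd F] [ContinuousConstSMul 𝕜 F]
    {Λ : α → E →ₗ[𝕜] F} {s : Set E} (hs : ∀ y ∈ s, Tendsto (Λ · y) l (𝓝 0)) {x : E}
    (hx : x ∈ Submodule.span 𝕜 s) : Tendsto (Λ · x) l (𝓝 0) := by
  induction hx using Submodule.span_induction with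
  | mem y hy => exact hs y hy
  | zero => simpa only [map_zero] using tendsto_const_nhds
  | add y z _ _ hy hz => simpa only [map_add, add_zero] using hy.add hz
  | smul c y _ hy => simpa only [map_smul, smul_zero] using hy.const_smul c

end EvalGerm

theorem linearIndependent_germ_of_isLittleO {α β ι 𝕜 F G : Type*} {l : Filter α} [LinearOrder β]
    [NormedField 𝕜] [SeminormedAddCommGroup F] [NormedSpace 𝕜 F] [SeminormedAddCommGroup G]
    {f : ι → α → F} {g : ι → α → G} {τ : ι → β} (hτ : Function.Injective τ)
    (hlt : ∀ i j, τ i < τ j → f j =o[l] g i) (hself : ∀ i, ¬ f i =o[l] g i) :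
    LinearIndependent 𝕜 fun i => (f i : Germ l F) := by
  classical
  rw [linearIndependent_iff']
  intro s c hsum
  by_contra! hc
  obtain ⟨i, hi, hmin⟩ := Finset.exists_min_image (s.filter (c · ≠ 0)) τ
    (Finset.filter_nonempty_iff.2 hc)
  obtain ⟨his, hci⟩ := Finset.mem_filter.1 hi
  have hrest : (∑ j ∈ s.erase i, c j • f j) =o[l] g i := by
    refine IsLittleO.sum fun j hj => ?_
    obtain ⟨hji, hjs⟩ := Finset.mem_erase.1 hj
    by_cases hcj : c j = 0
    · rw [hcj, zero_smul]
      exact isLittleO_zero _ _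
    · have hij : τ i < τ j :=
        (hmin j (Finset.mem_filter.2 ⟨hjs, hcj⟩)).lt_of_ne (hτ.ne hji.symm)
      exact (hlt i j hij).const_smul_left (c j)
  have hcancel : c i • f i =ᶠ[l] -∑ j ∈ s.erase i, c j • f j := by
    have hzero : ((∑ j ∈ s, c j • f j : α → F) : Germ l F) = ((0 : α → F) : Germ l F) :=
      (map_sum (Germ.coeAddHom l) (fun j => c j • f j) s).trans hsum
    filter_upwards [Germ.coe_eq.1 hzero] with a ha
    rw [← Finset.add_sum_erase s _ his] at ha
    exact eq_neg_of_add_eq_zero_left ha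
  exact hself i ((isLittleO_const_smul_left hci).1 (hcancel.trans_isLittleO hrest.neg_left))

section IntegerForms

variable {α ι κ : Type*} {l : Filter α}

theorem exists_common_denominator [Finite κ] (q : κ → ℚ) :
    ∃ d : ℤ, d ≠ 0 ∧ ∀ i, ∃ z : ℤ, (d * q i : ℚ) = z := by
  obtain ⟨d, hd⟩ := IsLocalization.exist_integer_multiples_of_finite (nonZeroDivisors ℤ) q
  refine ⟨d, nonZeroDivisors.coe_ne_zero d, fun i => ?_⟩
  obtain ⟨z, hz⟩ := hd i
  exact ⟨z, by simpa using hz.symm⟩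

theorem eventually_eq_zero_of_tendsto_intCast {z : α → ℤ}
    (hz : Tendsto (fun a => (z a : ℝ)) l (𝓝 0)) : ∀ᶠ a in l, z a = 0 := by
  rw [← Int.cast_zero, ← Function.comp_def, ← Int.isClosedEmbedding_coe_real.tendsto_nhds_iff,
    nhds_discrete, tendsto_pure] at hz
  exact hz

variable [Fintype κ]

theorem eventually_sum_mul_ratCast_eq_zero {m : α → κ → ℤ} {q : κ → ℚ}
    (h : Tendsto (fun a => ∑ i, (m a i : ℝ) * q i) l (𝓝 0)) :
    ∀ᶠ a in l, ∑ i, (m a i : ℝ) * q i = 0 := by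
  obtain ⟨d, hd, hdq⟩ := exists_common_denominator q
  choose z hz using hdq
  have hscaled (a : α) : d * ∑ i, (m a i : ℝ) * q i = (∑ i, m a i * z i : ℤ) := by
    push_cast
    rw [Finset.mul_sum]
    refine Finset.sum_congr rfl fun i _ => ?_
    have hzi : (d : ℝ) * q i = z i := mod_cast hz i
    rw [← hzi, mul_left_comm]
  have hlim : Tendsto (fun a => ((∑ i, m a i * z i : ℤ) : ℝ)) l (𝓝 0) := by
    simpa only [hscaled, mul_zero] using h.const_mul (d : ℝ)
  filter_upwards [eventually_eq_zero_of_tendsto_intCast hlim] with a ha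
  have hda : (d : ℝ) * ∑ i, (m a i : ℝ) * q i = 0 := by rw [hscaled, ha, Int.cast_zero]
  exact (mul_eq_zero.1 hda).resolve_left (Int.cast_ne_zero.2 hd)

/-- The linear form on `ℝ^κ` with integer coefficients `m`; the form `L n` is `intForm (m n)`. -/
def intForm (m : κ → ℤ) : EuclideanSpace ℝ κ →ₗ[ℝ] ℝ where
  toFun x := ∑ i, (m i : ℝ) * x i
  map_add' x y := by simp only [PiLp.add_apply, mul_add, Finset.sum_add_distrib]
  map_smul' c x := by
    simp only [PiLp.smul_apply, smul_eq_mul, Finset.mul_sum, mul_left_comm, RingHom.id_apply]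

theorem eq_zero_of_mem_span_of_rational {m : α → κ → ℤ} {e : ι → EuclideanSpace ℝ κ}
    (hlim : ∀ j, Tendsto (fun a => intForm (m a) (e j)) l (𝓝 0))
    (hind : LinearIndependent ℝ (evalGerm l (fun a => intForm (m a)) ∘ e))
    {x : EuclideanSpace ℝ κ} (hx : x ∈ Submodule.span ℝ (Set.range e))
    (hrat : ∀ i, ∃ q : ℚ, x i = q) : x = 0 := by
  choose q hq using hrat
  have hxlim : Tendsto (fun a => intForm (m a) x) l (𝓝 0) :=
    tendsto_zero_of_mem_span (Set.forall_mem_range.2 hlim) hx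
  have hform (a : α) : intForm (m a) x = ∑ i, (m a i : ℝ) * q i := by
    simp only [intForm, LinearMap.coe_mk, AddHom.coe_mk, hq]
  have hker : x ∈ LinearMap.ker (evalGerm l fun a => intForm (m a)) := by
    simp only [hform] at hxlim
    simpa only [mem_ker_evalGerm, hform] using eventually_sum_mul_ratCast_eq_zero hxlim
  exact Submodule.disjoint_def.1 (Submodule.range_ker_disjoint hind) x hx hker

end IntegerForms

section Rpow

variable {α : Type*} {l : Filter α} {Q : α → ℝ}

theorem tendsto_rpow_nhds_zero_of_neg {d : α → ℝ} {c : ℝ} (hQ : Tendsto Q l atTop)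
    (hd : Tendsto d l (𝓝 c)) (hc : c < 0) : Tendsto (fun a => Q a ^ d a) l (𝓝 0) := by
  have hexp : Tendsto (fun a => Real.exp (Real.log (Q a) * d a)) l (𝓝 0) :=
    Real.tendsto_exp_atBot.comp ((Real.tendsto_log_atTop.comp hQ).atTop_mul_neg hc hd)
  refine hexp.congr' ?_
  filter_upwards [hQ.eventually_gt_atTop 0] with a ha
  rw [Real.rpow_def_of_pos ha]

theorem isLittleO_rpow_rpow_of_lt {b c : α → ℝ} {B C : ℝ} (hQ : Tendsto Q l atTop)
    (hb : Tendsto b l (𝓝 B)) (hc : Tendsto c l (𝓝 C)) (hBC : B < C) :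
    (fun a => Q a ^ b a) =o[l] fun a => Q a ^ c a := by
  have hpos := hQ.eventually_gt_atTop 0
  refine isLittleO_of_tendsto' ?_ ?_
  · filter_upwards [hpos] with a ha h
    exact absurd h (Real.rpow_pos_of_pos ha _).ne'
  · refine (tendsto_rpow_nhds_zero_of_neg hQ (hb.sub hc) (sub_neg.2 hBC)).congr' ?_
    filter_upwards [hpos] with a ha
    exact Real.rpow_sub ha _ _

end Rpow

section Cosine

variable {ω φ : ℝ}

theorem sin_eq_zero_of_tendsto_cos
    (h : Tendsto (fun n : ℕ => Real.cos (n * ω + φ)) atTop (𝓝 0)) : Real.sin ω = 0 := by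
  -- The recurrence `x (n+2) = 2 cos ω x (n+1) - x n` of `x n = cos (n ω + φ)` preserves the
  -- quadratic form below.
  have hinv (n : ℕ) : Real.cos (n * ω + φ) ^ 2 + Real.cos ((n + 1 : ℕ) * ω + φ) ^ 2 -
      2 * Real.cos ω * (Real.cos (n * ω + φ) * Real.cos ((n + 1 : ℕ) * ω + φ)) =
        Real.sin ω ^ 2 := by
    have hstep : ((n + 1 : ℕ) : ℝ) * ω + φ = (n * ω + φ) + ω := by push_cast; ring
    rw [hstep, Real.cos_add (n * ω + φ) ω]
    linear_combination Real.sin ω ^ 2 * Real.sin_sq_add_cos_sq (n * ω + φ) -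
      Real.cos (n * ω + φ) ^ 2 * Real.sin_sq_add_cos_sq ω
  have hsucc := (tendsto_add_atTop_iff_nat 1).2 h
  have hlim := ((h.pow 2).add (hsucc.pow 2)).sub ((h.mul hsucc).const_mul (2 * Real.cos ω))
  simp only [hinv] at hlim
  simpa using tendsto_nhds_unique tendsto_const_nhds hlim

theorem abs_cos_natCast_mul_add (hω : Real.sin ω = 0) (n : ℕ) :
    |Real.cos (n * ω + φ)| = |Real.cos φ| := by
  obtain ⟨m, rfl⟩ := Real.sin_eq_zero_iff.1 hω
  have hshift : (n : ℝ) * (m * Real.pi) + φ = φ + (n * m : ℤ) * Real.pi := by push_cast; ring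
  rw [hshift, Real.cos_add_int_mul_pi, abs_mul, abs_neg_one_zpow, one_mul]

theorem cos_eq_zero_of_tendsto_cos
    (h : Tendsto (fun n : ℕ => Real.cos (n * ω + φ)) atTop (𝓝 0)) (n : ℕ) :
    Real.cos (n * ω + φ) = 0 := by
  have hconst := abs_cos_natCast_mul_add (φ := φ) (sin_eq_zero_of_tendsto_cos h)
  have hlim := h.abs
  simp only [hconst, abs_zero] at hlim
  rw [← abs_eq_zero, hconst, tendsto_nhds_unique tendsto_const_nhds hlim]

end Cosine

section FactoredSize

variable {α : Type*} {l : Filter α} {u g v : α → ℝ}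

theorem isBigO_of_abs_eq_mul_abs
    (hu : ∀ᶠ a in l, |u a| = g a * |v a|) (hv : v =O[l] fun _ => (1 : ℝ)) : u =O[l] g := by
  have hgv : (fun a => g a * |v a|) =O[l] g := by
    simpa only [mul_one] using (isBigO_refl g l).mul hv.abs_left
  exact (EventuallyEq.trans_isBigO hu hgv).of_abs_left

theorem tendsto_zero_of_isLittleO_of_abs_eq_mul_abs
    (hg : ∀ᶠ a in l, g a ≠ 0) (hu : ∀ᶠ a in l, |u a| = g a * |v a|) (h : u =o[l] g) :
    Tendsto v l (𝓝 0) := by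
  rw [tendsto_zero_iff_abs_tendsto_zero]
  refine h.abs_left.tendsto_div_nhds_zero.congr' ?_
  filter_upwards [hg, hu] with a hga hua
  rw [hua, mul_div_cancel_left₀ _ hga, Function.comp_apply]

end FactoredSize

section CosineSize

variable {u g η : ℕ → ℝ} {ω φ : ℝ}

theorem isBigO_of_abs_eq_mul_abs_cos (hη : Tendsto η atTop (𝓝 0))
    (hu : ∀ᶠ n : ℕ in atTop, |u n| = g n * |Real.cos (n * ω + φ) + η n|) :
    u =O[atTop] g := by
  have hcos : (fun n : ℕ => Real.cos (n * ω + φ)) =O[atTop] fun _ => (1 : ℝ) :=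
    isBigO_of_le _ fun n => by simpa using Real.abs_cos_le_one (n * ω + φ)
  exact isBigO_of_abs_eq_mul_abs hu (hcos.add (hη.isBigO_one ℝ))

theorem not_isLittleO_of_abs_eq_mul_abs_cos (hη : Tendsto η atTop (𝓝 0))
    (hcos : ∃ n : ℕ, Real.cos (n * ω + φ) ≠ 0) (hg : ∀ᶠ n in atTop, g n ≠ 0)
    (hu : ∀ᶠ n : ℕ in atTop, |u n| = g n * |Real.cos (n * ω + φ) + η n|) :
    ¬ u =o[atTop] g := by
  intro h
  obtain ⟨n, hn⟩ := hcos
  have hlim := (tendsto_zero_of_isLittleO_of_abs_eq_mul_abs hg hu h).sub hη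
  simp only [add_sub_cancel_right, sub_zero] at hlim
  exact hn (cos_eq_zero_of_tendsto_cos hlim n)

end CosineSize

theorem stmt4_general {ι κ : Type*} [Fintype κ] {e : ι → EuclideanSpace ℝ κ} {τ ω φ : ι → ℝ}
    (hτpos : ∀ j, 0 < τ j) (hτinj : Function.Injective τ)
    (hcos : ∀ j, ∃ n : ℕ, Real.cos (n * ω j + φ j) ≠ 0)
    {Q : ℕ → ℝ} (hQ : Tendsto Q atTop atTop) {m : ℕ → κ → ℤ} {ε η : ι → ℕ → ℝ}
    (hε : ∀ j, Tendsto (ε j) atTop (𝓝 0)) (hη : ∀ j, Tendsto (η j) atTop (𝓝 0))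
    (hL : ∀ j, ∀ᶠ n : ℕ in atTop, |∑ i, (m n i : ℝ) * e j i| =
      Q n ^ (-τ j + ε j n) * |Real.cos (n * ω j + φ j) + η j n|) :
    LinearIndependent ℝ e ∧
      ∀ x ∈ Submodule.span ℝ (Set.range e), (∀ i, ∃ q : ℚ, x i = q) → x = 0 := by
  have hexp (j : ι) : Tendsto (fun n => -τ j + ε j n) atTop (𝓝 (-τ j)) := by
    simpa only [add_zero] using (hε j).const_add (-τ j)
  have hsize (j : ι) : (fun n => intForm (m n) (e j)) =O[atTop] fun n => Q n ^ (-τ j + ε j n) :=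
    isBigO_of_abs_eq_mul_abs_cos (hη j) (hL j)
  have hscale (j : ι) : ∀ᶠ n in atTop, Q n ^ (-τ j + ε j n) ≠ 0 :=
    (hQ.eventually_gt_atTop 0).mono fun n hn => (Real.rpow_pos_of_pos hn _).ne'
  have hind : LinearIndependent ℝ (evalGerm atTop (fun n => intForm (m n)) ∘ e) :=
    linearIndependent_germ_of_isLittleO hτinj
      (fun i j hij => (hsize j).trans_isLittleO
        (isLittleO_rpow_rpow_of_lt hQ (hexp j) (hexp i) (neg_lt_neg hij)))
      (fun j => not_isLittleO_of_abs_eq_mul_abs_cos (hη j) (hcos j) (hscale j) (hL j))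
  have hlim (j : ι) : Tendsto (fun n => intForm (m n) (e j)) atTop (𝓝 0) :=
    (hsize j).trans_tendsto
      (tendsto_rpow_nhds_zero_of_neg hQ (hexp j) (neg_lt_zero.2 (hτpos j)))
  exact ⟨hind.of_comp _, fun x => eq_zero_of_mem_span_of_rational hlim hind⟩

/-- Under hypotheses (H), the vectors e_1,…,e_k are ℝ-linearly independent and their
ℝ-span meets ℚ^p only at 0. -/
theorem stmt4
    (k p : ℕ) (hk : 1 ≤ k) (hkp : k ≤ p - 1)
    (e : Fin k → EuclideanSpace ℝ (Fin p))
    (τs ωs φs : Fin k → ℝ)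
    (hτpos : ∀ j, 0 < τs j) (hτinj : Function.Injective τs)
    (hosc : {n : ℕ | ∀ j : Fin k, ∀ m : ℤ,
      (n : ℝ) * ωs j + φs j ≠ Real.pi / 2 + m * Real.pi}.Infinite)
    (Q : ℕ → ℕ) (hQmono : StrictMono Q) (hQpos : ∀ n, 0 < Q n)
    (hQgrowth :
      (∃ M : ℝ, 0 < M ∧ ∀ n : ℕ, 1 ≤ n →
        Real.log (Q (n + 1)) ≤ (1 + M / n) * Real.log (Q n)) ∨
      ((∀ j, ωs j = 0) ∧
        Filter.Tendsto (fun n => Real.log (Q (n + 1)) / Real.log (Q n))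
          Filter.atTop (nhds 1)))
    (l : ℕ → Fin p → ℤ)
    (εs ηs : Fin k → ℕ → ℝ) (θs : ℕ → ℝ)
    (hεs : ∀ j, Filter.Tendsto (εs j) Filter.atTop (nhds 0))
    (hηs : ∀ j, Filter.Tendsto (ηs j) Filter.atTop (nhds 0))
    (hθs : Filter.Tendsto θs Filter.atTop (nhds 0))
    (hL : ∀ n : ℕ, 1 ≤ n → ∀ j,
      |∑ i, (l n i : ℝ) * e j i| =
        (Q n : ℝ) ^ (-τs j + εs j n) * |Real.cos ((n : ℝ) * ωs j + φs j) + ηs j n|)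
    (hl : ∀ n : ℕ, 1 ≤ n → ∀ i, |(l n i : ℝ)| ≤ (Q n : ℝ) ^ (1 + θs n))
    :
    LinearIndependent ℝ e ∧
      ∀ x ∈ Submodule.span ℝ (Set.range e), (∀ i, ∃ q : ℚ, x i = (q : ℝ)) → x = 0 :=
  stmt4_general hτpos hτinj
    (fun j => hosc.nonempty.imp fun n hn => Real.cos_ne_zero_iff.2 fun m h =>
      hn j m (by rw [h]; ring))
    (tendsto_natCast_atTop_atTop.comp hQmono.tendsto_atTop) hεs hηs
    (fun j => (eventually_ge_atTop 1).mono fun n hn => hL n hn j)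
end
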